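/- (Uniform bound for the first flow) Let ρ > 0, let h : V → ℝ satisfy max_{x∈V} h(x) > 0, let 0 < T < +∞, and let u : V × [0,T) → ℝ be a solution of the first mean field flow ∂_t e^{u} = −Lu + ρ( h e^{u} / ∫_V h e^{u} dμ − 1/|V| ) with u(·,0) = u₀, ∫_V h e^{u₀} dμ ≠ 0, and ∫_V h e^{u(·,t)} dμ ≠ 0 for all t ∈ [0,T). Then there exists a constant C, depending only on (V, μ, W), T, ρ, h and u₀, such that ∫_V (|∇u(·,t)|² + u(·,t)²) dμ ≤ C for all t ∈ [0,T). -/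

import Mathlib

open Real Finset

variable {V : Type*}

/-- Discrete integral: `∫_V f dμ = Σ_x μ(x) f(x)`. -/
noncomputable def intV [Fintype V] (μ f : V → ℝ) : ℝ := ∑ x, μ x * f x

/-- Volume `|V| = Σ_x μ(x)`. -/
noncomputable def volV [Fintype V] (μ : V → ℝ) : ℝ := ∑ x, μ x

/-- The nonlocal (fractional graph Laplacian type) operator
`Lu(x) = (1/μ(x)) Σ_{y ≠ x} W(x,y)(u(x) − u(y))`. -/
noncomputable def opL [Fintype V] [DecidableEq V] (μ : V → ℝ) (W : V → V → ℝ)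
    (u : V → ℝ) (x : V) : ℝ :=
  (1 / μ x) * ∑ y ∈ univ.filter (fun y => y ≠ x), W x y * (u x - u y)

/-- Gradient form `∇u·∇v(x) = (1/(2μ(x))) Σ_{y ≠ x} W(x,y)(u(x)−u(y))(v(x)−v(y))`. -/
noncomputable def gradForm [Fintype V] [DecidableEq V] (μ : V → ℝ) (W : V → V → ℝ)
    (u v : V → ℝ) (x : V) : ℝ :=
  (1 / (2 * μ x)) * ∑ y ∈ univ.filter (fun y => y ≠ x), W x y * (u x - u y) * (v x - v y)

/-- `|∇u|²(x) = ∇u·∇u(x)`. -/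
noncomputable def gradSq [Fintype V] [DecidableEq V] (μ : V → ℝ) (W : V → V → ℝ)
    (u : V → ℝ) (x : V) : ℝ := gradForm μ W u u x

/-!
With `Z = ∫_V h e^u dμ`, the right-hand side of the flow is minus the gradient of
`J(u) = ½ ∫_V |∇u|² dμ + (ρ/|V|) ∫_V u dμ − ρ log |Z|`, so `J` decreases along the flow, and
testing the equation against the constant `1` shows that the mass `∫_V e^u dμ` is conserved.
Mass conservation bounds `u` above, bounds `max u` below and bounds `log |Z|` above.
By connectedness the oscillation of `u` is at most `(K ∫_V |∇u|² dμ)^{1/2}`, so the mean of `u` is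
bounded below up to this square root, which the quadratic term of `J` absorbs. Hence the Dirichlet
energy is bounded, and with it `u`. Nothing here depends on the length of the time interval.
-/

section Integral

variable [Fintype V] {μ f g u : V → ℝ}

lemma intV_add (μ f g : V → ℝ) : intV μ (fun x => f x + g x) = intV μ f + intV μ g := by
  simp only [intV, mul_add, sum_add_distrib]

lemma intV_const (μ : V → ℝ) (c : ℝ) : intV μ (fun _ => c) = volV μ * c := by
  simp only [intV, volV, sum_mul]

lemma intV_mono (hμ : ∀ x, 0 ≤ μ x) (hfg : ∀ x, f x ≤ g x) : intV μ f ≤ intV μ g :=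
  sum_le_sum fun x _ => mul_le_mul_of_nonneg_left (hfg x) (hμ x)

lemma intV_nonneg (hμ : ∀ x, 0 ≤ μ x) (hf : ∀ x, 0 ≤ f x) : 0 ≤ intV μ f :=
  sum_nonneg fun x _ => mul_nonneg (hμ x) (hf x)

lemma mul_le_intV (hμ : ∀ x, 0 ≤ μ x) (hf : ∀ x, 0 ≤ f x) (x : V) : μ x * f x ≤ intV μ f :=
  single_le_sum (f := fun y => μ y * f y) (fun y _ => mul_nonneg (hμ y) (hf y)) (mem_univ x)

lemma abs_intV_mul_le (hμ : ∀ x, 0 ≤ μ x) (hg : ∀ x, 0 ≤ g x) :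
    |intV μ (fun x => f x * g x)| ≤ ‖f‖ * intV μ g := by
  rw [intV, intV, mul_sum]
  refine (abs_sum_le_sum_abs _ _).trans (sum_le_sum fun x _ => ?_)
  calc |μ x * (f x * g x)| = |f x| * (μ x * g x) := by
        rw [abs_mul, abs_mul, abs_of_nonneg (hμ x), abs_of_nonneg (hg x)]; ring
    _ ≤ ‖f‖ * (μ x * g x) :=
        mul_le_mul_of_nonneg_right (norm_le_pi_norm f x) (mul_nonneg (hμ x) (hg x))

lemma volV_pos [Nonempty V] (hμ : ∀ x, 0 < μ x) : 0 < volV μ :=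
  sum_pos (fun x _ => hμ x) univ_nonempty

lemma intV_pos [Nonempty V] (hμ : ∀ x, 0 < μ x) (hf : ∀ x, 0 < f x) : 0 < intV μ f :=
  sum_pos (fun x _ => mul_pos (hμ x) (hf x)) univ_nonempty

lemma hasDerivWithinAt_intV {F : ℝ → V → ℝ} {F' : V → ℝ} {I : Set ℝ} {t : ℝ}
    (hF : ∀ x, HasDerivWithinAt (fun s => F s x) (F' x) I t) :
    HasDerivWithinAt (fun s => intV μ (F s)) (intV μ F') I t :=
  HasDerivWithinAt.fun_sum fun x _ => (hF x).const_mul (μ x)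

lemma le_log_intV_exp_div (hμ : ∀ x, 0 < μ x) (u : V → ℝ) (x : V) :
    u x ≤ log (intV μ (fun y => exp (u y)) / μ x) := by
  have : Nonempty V := ⟨x⟩
  rw [le_log_iff_exp_le (div_pos (intV_pos hμ fun y => exp_pos (u y)) (hμ x)),
    le_div_iff₀' (hμ x)]
  exact mul_le_intV (fun y => (hμ y).le) (fun y => (exp_pos (u y)).le) x

lemma exists_log_intV_exp_div_volV_le [Nonempty V] (hμ : ∀ x, 0 < μ x) (u : V → ℝ) :
    ∃ x, log (intV μ (fun y => exp (u y)) / volV μ) ≤ u x := by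
  obtain ⟨x, hx⟩ := Finite.exists_max u
  refine ⟨x, ?_⟩
  rw [log_le_iff_le_exp (div_pos (intV_pos hμ fun y => exp_pos (u y)) (volV_pos hμ)),
    div_le_iff₀' (volV_pos hμ), ← intV_const]
  exact intV_mono (fun y => (hμ y).le) fun y => exp_le_exp.mpr (hx y)

lemma log_intV_exp_div_volV_sub_sqrt_le (hμ : ∀ x, 0 < μ x) {A : ℝ}
    (hosc : ∀ x y, (u x - u y) ^ 2 ≤ A) (y : V) :
    log (intV μ (fun z => exp (u z)) / volV μ) - √A ≤ u y := by
  have : Nonempty V := ⟨y⟩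
  obtain ⟨x, hx⟩ := exists_log_intV_exp_div_volV_le hμ u
  linarith [le_of_abs_le (abs_le_sqrt (hosc x y))]

end Integral

section Gradient

variable [Fintype V] [DecidableEq V] {μ : V → ℝ} {W : V → V → ℝ}

lemma mul_opL {x : V} (hx : μ x ≠ 0) (u : V → ℝ) :
    μ x * opL μ W u x = ∑ y, W x y * (u x - u y) := by
  rw [opL, ← mul_assoc, mul_one_div_cancel hx, one_mul]
  refine sum_filter_of_ne fun y _ hy => ?_
  rintro rfl
  simp at hy

lemma mul_gradForm {x : V} (hx : μ x ≠ 0) (u v : V → ℝ) :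
    μ x * gradForm μ W u v x = 1 / 2 * ∑ y, W x y * (u x - u y) * (v x - v y) := by
  have hμx : μ x * (1 / (2 * μ x)) = 1 / 2 := by field_simp
  rw [gradForm, ← mul_assoc, hμx]
  congr 1
  refine sum_filter_of_ne fun y _ hy => ?_
  rintro rfl
  simp at hy

lemma intV_gradForm (hμ : ∀ x, μ x ≠ 0) (hWsym : ∀ x y, W x y = W y x) (u v : V → ℝ) :
    intV μ (gradForm μ W u v) = intV μ (fun x => opL μ W u x * v x) := by
  have hswap : ∑ x, ∑ y, W x y * (u x - u y) * v y = -∑ x, ∑ y, W x y * (u x - u y) * v x := by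
    rw [sum_comm]
    simp only [← sum_neg_distrib]
    refine sum_congr rfl fun x _ => sum_congr rfl fun y _ => ?_
    rw [hWsym y x]
    ring
  simp only [intV, mul_gradForm (hμ _), ← mul_assoc, mul_opL (hμ _), sum_mul]
  simp only [mul_sub _ (v _) (v _), sum_sub_distrib, ← mul_sum, hswap]
  ring

lemma gradSq_nonneg (hμ : ∀ x, 0 ≤ μ x) (hW : ∀ x y, x ≠ y → 0 ≤ W x y) (u : V → ℝ) (x : V) :
    0 ≤ gradSq μ W u x := by
  refine mul_nonneg (one_div_nonneg.mpr (mul_nonneg zero_le_two (hμ x))) (sum_nonneg fun y hy => ?_)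
  rw [mul_assoc]
  exact mul_nonneg (hW x y (mem_filter.mp hy).2.symm) (mul_self_nonneg _)

lemma mul_sq_sub_le_intV_gradSq (hμ : ∀ x, 0 < μ x) (hW : ∀ x y, x ≠ y → 0 ≤ W x y)
    (u : V → ℝ) (x y : V) : W x y * (u x - u y) ^ 2 ≤ 2 * intV μ (gradSq μ W u) := by
  have hterm : ∀ z, 0 ≤ W x z * (u x - u z) * (u x - u z) := fun z => by
    rcases eq_or_ne x z with rfl | hxz
    · simp
    · rw [mul_assoc]
      exact mul_nonneg (hW x z hxz) (mul_self_nonneg _)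
  calc W x y * (u x - u y) ^ 2 = W x y * (u x - u y) * (u x - u y) := by ring
    _ ≤ ∑ z, W x z * (u x - u z) * (u x - u z) :=
        single_le_sum (f := fun z => W x z * (u x - u z) * (u x - u z))
          (fun z _ => hterm z) (mem_univ y)
    _ = 2 * (μ x * gradSq μ W u x) := by rw [gradSq, mul_gradForm (hμ x).ne']; ring
    _ ≤ 2 * intV μ (gradSq μ W u) := by
        have hμ' := fun z => (hμ z).le
        exact mul_le_mul_of_nonneg_left (mul_le_intV hμ' (gradSq_nonneg hμ' hW u) x) zero_le_two

lemma exists_sq_sub_le_mul_intV_gradSq_of_reflTransGen (hμ : ∀ x, 0 < μ x)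
    (hW : ∀ x y, x ≠ y → 0 ≤ W x y) {x y : V}
    (hxy : Relation.ReflTransGen (fun a b => 0 < W a b) x y) :
    ∃ K : ℝ, ∀ u : V → ℝ, (u x - u y) ^ 2 ≤ K * intV μ (gradSq μ W u) := by
  induction hxy with
  | refl => exact ⟨0, fun u => by simp⟩
  | @tail b c _ hbc ih =>
    obtain ⟨K, hK⟩ := ih
    refine ⟨2 * (K + 2 / W b c), fun u => ?_⟩
    have hedge : (u b - u c) ^ 2 ≤ 2 / W b c * intV μ (gradSq μ W u) := by
      rw [div_mul_eq_mul_div, le_div_iff₀' hbc]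
      exact mul_sq_sub_le_intV_gradSq hμ hW u b c
    calc (u x - u c) ^ 2 = ((u x - u b) + (u b - u c)) ^ 2 := by ring
      _ ≤ 2 * ((u x - u b) ^ 2 + (u b - u c) ^ 2) := add_sq_le
      _ ≤ 2 * (K + 2 / W b c) * intV μ (gradSq μ W u) := by linarith [hK u]

lemma exists_pos_forall_sq_sub_le_mul_intV_gradSq (hμ : ∀ x, 0 < μ x)
    (hW : ∀ x y, x ≠ y → 0 ≤ W x y)
    (hconn : ∀ x y, Relation.ReflTransGen (fun a b => 0 < W a b) x y) :
    ∃ K : ℝ, 0 < K ∧ ∀ (u : V → ℝ) (x y : V), (u x - u y) ^ 2 ≤ K * intV μ (gradSq μ W u) := by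
  choose k hk using fun p : V × V =>
    exists_sq_sub_le_mul_intV_gradSq_of_reflTransGen hμ hW (hconn p.1 p.2)
  obtain ⟨K, hK⟩ := Finite.exists_le k
  refine ⟨max K 1, lt_max_of_lt_right one_pos, fun u x y => (hk (x, y) u).trans ?_⟩
  have hμ' := fun z => (hμ z).le
  exact mul_le_mul_of_nonneg_right ((hK (x, y)).trans (le_max_left K 1))
    (intV_nonneg hμ' (gradSq_nonneg hμ' hW u))

lemma hasDerivWithinAt_gradSq {u : ℝ → V → ℝ} {v : V → ℝ} {I : Set ℝ} {t : ℝ}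
    (hu : ∀ x, HasDerivWithinAt (fun s => u s x) (v x) I t) (x : V) :
    HasDerivWithinAt (fun s => gradSq μ W (u s) x) (2 * gradForm μ W (u t) v x) I t := by
  have hdiff : ∀ y, HasDerivWithinAt (fun s => u s x - u s y) (v x - v y) I t :=
    fun y => (hu x).fun_sub (hu y)
  refine ((HasDerivWithinAt.fun_sum fun y _ =>
    ((hdiff y).const_mul (W x y)).fun_mul (hdiff y)).const_mul _).congr_deriv ?_
  rw [gradForm, mul_left_comm, mul_sum _ _ 2]
  congr 1
  exact sum_congr rfl fun y _ => by ring

end Gradient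

section MeanField

variable [Fintype V] [DecidableEq V] {μ : V → ℝ} {W : V → V → ℝ} {ρ : ℝ} {h : V → ℝ}

/-- The right-hand side `−Lu + ρ (h e^u / ∫_V h e^u dμ − 1/|V|)` of the first mean field flow,
which prescribes `∂_t e^u` and not `∂_t u`. -/
noncomputable def meanFieldRHS (μ : V → ℝ) (W : V → V → ℝ) (ρ : ℝ) (h u : V → ℝ) (x : V) : ℝ :=
  -(opL μ W u x) +
    ρ * (h x * exp (u x) / intV μ (fun y => h y * exp (u y)) - 1 / volV μ)

/-- The energy `J(u) = ½ ∫_V |∇u|² dμ + (ρ/|V|) ∫_V u dμ − ρ log |∫_V h e^u dμ|` whose negative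
gradient is `meanFieldRHS`. As `Real.log` is `log |·|`, the last integral may have either sign. -/
noncomputable def meanFieldEnergy (μ : V → ℝ) (W : V → V → ℝ) (ρ : ℝ) (h u : V → ℝ) : ℝ :=
  1 / 2 * intV μ (gradSq μ W u) + ρ / volV μ * intV μ u
    - ρ * log (intV μ (fun x => h x * exp (u x)))

lemma intV_meanFieldRHS_mul (hμ : ∀ x, μ x ≠ 0) (hWsym : ∀ x y, W x y = W y x) (u v : V → ℝ) :
    intV μ (fun x => meanFieldRHS μ W ρ h u x * v x) =
      -intV μ (gradForm μ W u v)
        + ρ * (intV μ (fun x => h x * (exp (u x) * v x)) / intV μ (fun x => h x * exp (u x))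
          - intV μ v / volV μ) := by
  rw [intV_gradForm hμ hWsym]
  generalize hZ : intV μ (fun x => h x * exp (u x)) = Z
  simp only [meanFieldRHS, hZ]
  clear hZ
  simp only [intV]
  rw [sum_div, sum_div, ← sum_sub_distrib, mul_sum, ← sum_neg_distrib, ← sum_add_distrib]
  exact sum_congr rfl fun x _ => by ring

lemma intV_meanFieldRHS [Nonempty V] (hμ : ∀ x, 0 < μ x) (hWsym : ∀ x y, W x y = W y x)
    {u : V → ℝ} (hZ : intV μ (fun x => h x * exp (u x)) ≠ 0) :
    intV μ (meanFieldRHS μ W ρ h u) = 0 := by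
  have hgrad : gradForm μ W u (fun _ => 1) = fun _ => 0 := by
    ext x
    simp [gradForm]
  have htest := intV_meanFieldRHS_mul (ρ := ρ) (h := h) (fun x => (hμ x).ne') hWsym u (fun _ => 1)
  simpa only [hgrad, intV_const, mul_one, mul_zero, neg_zero, div_self hZ,
    div_self (volV_pos hμ).ne', sub_self, add_zero] using htest

lemma hasDerivWithinAt_meanFieldEnergy (hμ : ∀ x, μ x ≠ 0) (hWsym : ∀ x y, W x y = W y x)
    {u : ℝ → V → ℝ} {v : V → ℝ} {I : Set ℝ} {t : ℝ}
    (hZ : intV μ (fun x => h x * exp (u t x)) ≠ 0)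
    (hu : ∀ x, HasDerivWithinAt (fun s => u s x) (v x) I t) :
    HasDerivWithinAt (fun s => meanFieldEnergy μ W ρ h (u s))
      (-intV μ (fun x => meanFieldRHS μ W ρ h (u t) x * v x)) I t := by
  have hdirichlet := hasDerivWithinAt_intV (μ := μ) (hasDerivWithinAt_gradSq (μ := μ) (W := W) hu)
  have hmean := hasDerivWithinAt_intV (μ := μ) hu
  have hlog := (hasDerivWithinAt_intV (μ := μ) fun x => (hu x).exp.const_mul (h x)).log hZ
  refine (((hdirichlet.const_mul (1 / 2)).fun_add (hmean.const_mul (ρ / volV μ))).fun_sub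
    (hlog.const_mul ρ)).congr_deriv ?_
  have htwo : intV μ (fun x => 2 * gradForm μ W (u t) v x) = 2 * intV μ (gradForm μ W (u t) v) := by
    simp only [intV, mul_sum, mul_left_comm]
  rw [intV_meanFieldRHS_mul hμ hWsym, htwo]
  ring

lemma intV_gradSq_le_of_sq_sub_le [Nonempty V] (hμ : ∀ x, 0 < μ x) (hρ : 0 ≤ ρ) {u : V → ℝ}
    (hZ : intV μ (fun x => h x * exp (u x)) ≠ 0) {K : ℝ} (hK : 0 < K)
    (hosc : ∀ x y, (u x - u y) ^ 2 ≤ K * intV μ (gradSq μ W u)) :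
    intV μ (gradSq μ W u) ≤
      4 * (meanFieldEnergy μ W ρ h u + ρ * log (‖h‖ * intV μ (fun x => exp (u x)))
        - ρ * log (intV μ (fun x => exp (u x)) / volV μ) + ρ ^ 2 * K) := by
  set D := intV μ (gradSq μ W u)
  set m := intV μ (fun x => exp (u x))
  have hvol := volV_pos hμ
  have hlog : log (intV μ (fun x => h x * exp (u x))) ≤ log (‖h‖ * m) := by
    rw [← log_abs]
    exact log_le_log (abs_pos.mpr hZ)
      (abs_intV_mul_le (fun x => (hμ x).le) fun x => (exp_pos (u x)).le)
  have hmean : ρ * (log (m / volV μ) - √(K * D)) ≤ ρ / volV μ * intV μ u := by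
    rw [div_mul_eq_mul_div, mul_div_assoc]
    refine mul_le_mul_of_nonneg_left ?_ hρ
    rw [le_div_iff₀' hvol, ← intV_const]
    exact intV_mono (fun x => (hμ x).le) (log_intV_exp_div_volV_sub_sqrt_le hμ hosc)
  have hKD : 0 ≤ K * D := (sq_nonneg _).trans (hosc (Classical.arbitrary V) (Classical.arbitrary V))
  have habsorb : ρ * √(K * D) ≤ ρ ^ 2 * K + D / 4 := by
    have hsq : √(K * D) ^ 2 = K * D := sq_sqrt hKD
    refine le_of_mul_le_mul_left ?_ hK
    nlinarith [sq_nonneg (2 * (ρ * K) - √(K * D))]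
  have henergy : meanFieldEnergy μ W ρ h u =
      1 / 2 * D + ρ / volV μ * intV μ u - ρ * log (intV μ (fun x => h x * exp (u x))) := rfl
  linarith [mul_le_mul_of_nonneg_left hlog hρ]

lemma exists_intV_gradSq_add_sq_le_of_meanFieldEnergy_le [Nonempty V] (hμ : ∀ x, 0 < μ x)
    (hW : ∀ x y, x ≠ y → 0 ≤ W x y)
    (hconn : ∀ x y, Relation.ReflTransGen (fun a b => 0 < W a b) x y) (hρ : 0 ≤ ρ)
    (h : V → ℝ) (m E : ℝ) :
    ∃ C : ℝ, ∀ u : V → ℝ, intV μ (fun x => exp (u x)) = m →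
      intV μ (fun x => h x * exp (u x)) ≠ 0 → meanFieldEnergy μ W ρ h u ≤ E →
      intV μ (fun x => gradSq μ W u x + u x ^ 2) ≤ C := by
  obtain ⟨K, hK, hosc⟩ := exists_pos_forall_sq_sub_le_mul_intV_gradSq hμ hW hconn
  obtain ⟨B, hB⟩ := Finite.exists_le fun x => log (m / μ x)
  let c := log (m / volV μ)
  let M := 4 * (E + ρ * log (‖h‖ * m) - ρ * c + ρ ^ 2 * K)
  let R := max B (-(c - √(K * M)))
  refine ⟨M + volV μ * R ^ 2, fun u hm hZ hE => ?_⟩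
  have hD : intV μ (gradSq μ W u) ≤ M := by
    have := intV_gradSq_le_of_sq_sub_le hμ hρ hZ hK (hosc u)
    rw [hm] at this
    linarith
  have hupper (x : V) : u x ≤ B := (hm ▸ le_log_intV_exp_div hμ u x).trans (hB x)
  have hlower (x : V) : c - √(K * M) ≤ u x := by
    simpa only [hm] using log_intV_exp_div_volV_sub_sqrt_le hμ
      (fun y z => (hosc u y z).trans (mul_le_mul_of_nonneg_left hD hK.le)) x
  have hsq (x : V) : u x ^ 2 ≤ R ^ 2 :=
    sq_le_sq' (neg_le.mp ((neg_le_neg (hlower x)).trans (le_max_right B _)))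
      ((hupper x).trans (le_max_left B _))
  rw [intV_add, ← intV_const]
  exact add_le_add hD (intV_mono (fun x => (hμ x).le) hsq)

end MeanField

section Flow

variable [Fintype V] [DecidableEq V] {μ : V → ℝ} {W : V → V → ℝ} {ρ : ℝ} {h : V → ℝ}
  {I : Set ℝ} {u : ℝ → V → ℝ}

/-- `u` solves the first mean field flow on the time set `I`. Derivatives are taken within `I`, so
they are one-sided at an endpoint of an interval. -/
structure IsFirstMeanFieldFlow (μ : V → ℝ) (W : V → V → ℝ) (ρ : ℝ) (h : V → ℝ) (I : Set ℝ)
    (u : ℝ → V → ℝ) : Prop where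
  intV_ne_zero : ∀ t ∈ I, intV μ (fun x => h x * exp (u t x)) ≠ 0
  hasDerivWithinAt_exp : ∀ t ∈ I, ∀ x,
    HasDerivWithinAt (fun s => exp (u s x)) (meanFieldRHS μ W ρ h (u t) x) I t

namespace IsFirstMeanFieldFlow

lemma hasDerivWithinAt (hu : IsFirstMeanFieldFlow μ W ρ h I u) {t : ℝ} (ht : t ∈ I) (x : V) :
    HasDerivWithinAt (fun s => u s x) (meanFieldRHS μ W ρ h (u t) x / exp (u t x)) I t := by
  simpa only [log_exp] using (hu.hasDerivWithinAt_exp t ht x).log (exp_pos _).ne'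

lemma intV_exp_eq [Nonempty V] (hu : IsFirstMeanFieldFlow μ W ρ h I u) (hμ : ∀ x, 0 < μ x)
    (hWsym : ∀ x y, W x y = W y x) (hI : Convex ℝ I) {s t : ℝ} (hs : s ∈ I) (ht : t ∈ I) :
    intV μ (fun x => exp (u t x)) = intV μ (fun x => exp (u s x)) := by
  have hbound := hI.norm_image_sub_le_of_norm_hasDerivWithin_le (C := 0)
    (fun r hr => hasDerivWithinAt_intV (μ := μ) (hu.hasDerivWithinAt_exp r hr))
    (fun r hr => (norm_eq_zero.mpr (intV_meanFieldRHS hμ hWsym (hu.intV_ne_zero r hr))).le) hs ht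
  rw [zero_mul] at hbound
  exact sub_eq_zero.mp (norm_le_zero_iff.mp hbound)

lemma antitoneOn_meanFieldEnergy (hu : IsFirstMeanFieldFlow μ W ρ h I u) (hμ : ∀ x, 0 < μ x)
    (hWsym : ∀ x y, W x y = W y x) (hI : Convex ℝ I) :
    AntitoneOn (fun t => meanFieldEnergy μ W ρ h (u t)) I := by
  have hderiv := fun t ht => hasDerivWithinAt_meanFieldEnergy (ρ := ρ) (fun x => (hμ x).ne') hWsym
    (hu.intV_ne_zero t ht) (hu.hasDerivWithinAt ht)
  refine antitoneOn_of_hasDerivWithinAt_nonpos hI (fun t ht => (hderiv t ht).continuousWithinAt)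
    (fun t ht => (hderiv t (interior_subset ht)).mono interior_subset) fun t _ => ?_
  refine neg_nonpos.mpr (intV_nonneg (fun x => (hμ x).le) fun x => ?_)
  rw [← mul_div_assoc]
  exact div_nonneg (mul_self_nonneg _) (exp_pos _).le

end IsFirstMeanFieldFlow

end Flow

theorem first_flow_uniform_bound_general [Fintype V] [Nonempty V] [DecidableEq V]
    {μ : V → ℝ} {W : V → V → ℝ} (hμ : ∀ x, 0 < μ x) (hWsym : ∀ x y, W x y = W y x)
    (hW : ∀ x y, x ≠ y → 0 ≤ W x y)
    (hconn : ∀ x y, Relation.ReflTransGen (fun a b => 0 < W a b) x y)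
    {ρ : ℝ} (hρ : 0 ≤ ρ) (h u₀ : V → ℝ) :
    ∃ C : ℝ, ∀ (I : Set ℝ) (u : ℝ → V → ℝ), Convex ℝ I → 0 ∈ I → u 0 = u₀ →
      IsFirstMeanFieldFlow μ W ρ h I u → ∀ t ∈ I, 0 ≤ t →
      intV μ (fun x => gradSq μ W (u t) x + u t x ^ 2) ≤ C := by
  obtain ⟨C, hC⟩ := exists_intV_gradSq_add_sq_le_of_meanFieldEnergy_le hμ hW hconn hρ h
    (intV μ fun x => exp (u₀ x)) (meanFieldEnergy μ W ρ h u₀)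
  refine ⟨C, ?_⟩
  rintro I u hI h0 rfl hu t ht h0t
  exact hC (u t) (hu.intV_exp_eq hμ hWsym hI h0 ht) (hu.intV_ne_zero t ht)
    (hu.antitoneOn_meanFieldEnergy hμ hWsym hI h0 ht h0t)

/-- (Uniform bound for the first flow) Along any solution of the first mean field flow on a
finite time interval `[0,T)`, the `W^{s,2}` norm `∫_V (|∇u|² + u²) dμ` stays bounded. -/
theorem first_flow_uniform_bound [Fintype V] [Nonempty V] [DecidableEq V]
    (μ : V → ℝ) (W : V → V → ℝ)
    (hμ : ∀ x, 0 < μ x)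
    (hWsym : ∀ x y, W x y = W y x)
    (hWpos : ∀ x y, x ≠ y → 0 < W x y)
    (ρ : ℝ) (hρ : 0 < ρ)
    (h : V → ℝ) (hmax : ∃ x, 0 < h x)
    (T : ℝ) (hT : 0 < T) (u : ℝ → V → ℝ) (u₀ : V → ℝ) (hinit : u 0 = u₀)
    (hu₀ : intV μ (fun x => h x * Real.exp (u₀ x)) ≠ 0)
    (hne : ∀ t ∈ Set.Ico (0 : ℝ) T, intV μ (fun y => h y * Real.exp (u t y)) ≠ 0)
    (hflow : ∀ x, ∀ t ∈ Set.Ico (0 : ℝ) T,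
      HasDerivAt (fun s => Real.exp (u s x))
        (-(opL μ W (u t) x) +
          ρ * (h x * Real.exp (u t x) / intV μ (fun y => h y * Real.exp (u t y)) - 1 / volV μ))
        t) :
    ∃ C : ℝ, ∀ t ∈ Set.Ico (0 : ℝ) T,
      intV μ (fun x => gradSq μ W (u t) x + (u t x) ^ 2) ≤ C := by
  have hconn (x y : V) : Relation.ReflTransGen (fun a b => 0 < W a b) x y := by
    rcases eq_or_ne x y with rfl | hxy
    exacts [.refl, .single (hWpos x y hxy)]
  obtain ⟨C, hC⟩ := first_flow_uniform_bound_general hμ hWsym (fun x y hxy => (hWpos x y hxy).le)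
    hconn hρ.le h u₀
  exact ⟨C, fun t ht => hC (Set.Ico 0 T) u (convex_Ico 0 T) (Set.left_mem_Ico.mpr hT) hinit
    ⟨hne, fun s hs x => (hflow x s hs).hasDerivWithinAt⟩ t ht ht.1⟩
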